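/- arXiv:1604.03206 — 3 statements merged into one kernel-verified Lean document; each statement's English description precedes it below -/
import Mathlib

section
/- For every n, the center of the algebra B_n is isomorphic as a ℂ-algebra to the direct sum, over all subsets E of {1,…,n}, of the centers Z(ℂ[S_E]) of the complex group algebras of the symmetric groups on E. -/
/-!
The monoid homomorphisms `P_n → ℂ[S_E]` sending `(F, f)` to `f|_E` if `F ⊆ E` and to `0` otherwise
induce an algebra homomorphism `B_n → ∏_E ℂ[S_E]`. It is unitriangular for inclusion of supports:
the image of `(E, σ)` is the basis element `σ` of the factor `ℂ[S_E]`, plus terms in factors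
`ℂ[S_F]` with `F ⊋ E`. Hence it is surjective (`PartialPerm.toPiPermAlgebra_surjective`). Both
sides have dimension `∑_E |E|!`, because a partial permutation amounts to a subset `E` and a
permutation of `E` (`PartialPerm.equivSigma`), so the homomorphism is an isomorphism. Passing to
centers, and using that the center of a product is the product of the centers (`centerEquivPi`),
gives the result.
-/

/-- A *partial permutation* of `{0, …, n-1}` (modeled as `Fin n`): a pair `(E, f)`
where `E` is a finite subset (the *support*) and `f` is a permutation fixing
every point outside `E`. -/
structure PartialPerm (n : ℕ) where
  support : Finset (Fin n)
  perm : Equiv.Perm (Fin n)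
  fixes : ∀ x : Fin n, x ∉ support → perm x = x

namespace PartialPerm

theorem ext' {n : ℕ} {a b : PartialPerm n} (h1 : a.support = b.support)
    (h2 : a.perm = b.perm) : a = b := by
  cases a; cases b; simp_all

/-- The monoid structure: `(E₁,f₁)·(E₂,f₂) = (E₁ ∪ E₂, f₁ ∘ f₂)`, with identity `(∅, id)`. -/
instance (n : ℕ) : Monoid (PartialPerm n) where
  mul a b := ⟨a.support ∪ b.support, a.perm * b.perm, fun x hx => by
    simp only [Finset.mem_union, not_or] at hx
    simp [Equiv.Perm.mul_apply, b.fixes x hx.2, a.fixes x hx.1]⟩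
  one := ⟨∅, 1, fun _ _ => rfl⟩
  mul_assoc a b c := ext' (Finset.union_assoc _ _ _) (mul_assoc _ _ _)
  one_mul a := ext' (Finset.empty_union _) (one_mul _)
  mul_one a := ext' (Finset.union_empty _) (mul_one _)

noncomputable instance (n : ℕ) : Fintype (PartialPerm n) :=
  Fintype.ofInjective (fun a => (a.support, a.perm))
    (fun _ _ h => ext' (congrArg Prod.fst h) (congrArg Prod.snd h))

/-- The conjugation action of `S_n` on partial permutations:
`v • (E, f) = (v E, v ∘ f ∘ v⁻¹)`. -/
def conj {n : ℕ} (v : Equiv.Perm (Fin n)) (a : PartialPerm n) : PartialPerm n :=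
  ⟨a.support.image v, v * a.perm * v⁻¹, fun x hx => by
    have h : v.symm x ∉ a.support := fun hmem =>
      hx (Finset.mem_image.mpr ⟨v.symm x, hmem, v.apply_symm_apply x⟩)
    simp [Equiv.Perm.mul_apply, Equiv.Perm.inv_def, a.fixes _ h]⟩

instance (n : ℕ) : SMul (Equiv.Perm (Fin n)) (PartialPerm n) := ⟨conj⟩

@[simp] theorem smul_support {n : ℕ} (v : Equiv.Perm (Fin n)) (a : PartialPerm n) :
    (v • a).support = a.support.image v := rfl

@[simp] theorem smul_perm {n : ℕ} (v : Equiv.Perm (Fin n)) (a : PartialPerm n) :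
    (v • a).perm = v * a.perm * v⁻¹ := rfl

instance (n : ℕ) : MulAction (Equiv.Perm (Fin n)) (PartialPerm n) where
  one_smul a := ext' (by simp) (by simp)
  mul_smul v w a := ext'
    (by rw [smul_support, smul_support, smul_support, Finset.image_image, ← Equiv.Perm.coe_mul])
    (by simp only [smul_perm]; group)

/-- The cycle type of a partial permutation `(E, f)`: the cycle lengths (≥ 2) of `f`,
together with one part `1` for each fixed point of `f` inside `E`.  It is a partition
of `|E|`. -/
def pCycleType {n : ℕ} (a : PartialPerm n) : Multiset ℕ :=
  a.perm.cycleType + Multiset.replicate (a.support.card - a.perm.support.card) 1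

/-- `A Δ n` : the sum, in the monoid algebra `B_n = ℂ[P_n]`, of all partial
permutations of cycle type `Δ` (zero if there are none, e.g. when `|Δ| > n`). -/
noncomputable def A (Δ : Multiset ℕ) (n : ℕ) : MonoidAlgebra ℂ (PartialPerm n) :=
  ∑ a : PartialPerm n, if pCycleType a = Δ then MonoidAlgebra.single a (1 : ℂ) else 0

end PartialPerm

namespace PartialPerm

/-- A partial permutation with support inside `E`, restricted to a permutation of `E`. -/
def restrict {n : ℕ} (a : PartialPerm n) (E : Finset (Fin n)) (h : a.support ⊆ E) :
    Equiv.Perm {x : Fin n // x ∈ E} :=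
  a.perm.subtypePerm fun x => by
    by_cases hx : x ∈ a.support
    · have hax : a.perm x ∈ a.support := by
        by_contra hc
        rw [a.perm.injective (a.fixes _ hc)] at hc
        exact hc hx
      exact ⟨fun _ => h hx, fun _ => h hax⟩
    · rw [a.fixes x hx]

/-- The partial permutation with support `E` extending a permutation of `E` by the identity. -/
def ofPerm {n : ℕ} (E : Finset (Fin n)) (σ : Equiv.Perm {x : Fin n // x ∈ E}) :
    PartialPerm n :=
  ⟨E, Equiv.Perm.ofSubtype σ, fun _ hx => Equiv.Perm.ofSubtype_apply_of_not_mem σ hx⟩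

theorem restrict_ofPerm {n : ℕ} (E : Finset (Fin n)) (σ : Equiv.Perm {x : Fin n // x ∈ E})
    (h : (ofPerm E σ).support ⊆ E) : (ofPerm E σ).restrict E h = σ :=
  Equiv.Perm.subtypePerm_ofSubtype σ

theorem ofPerm_restrict {n : ℕ} (a : PartialPerm n) :
    ofPerm a.support (a.restrict a.support subset_rfl) = a :=
  ext' rfl (Equiv.Perm.ofSubtype_subtypePerm _ fun x hx => by
    by_contra hc
    exact hx (a.fixes x hc))

/-- Partial permutations correspond to pairs of a subset `E` and a permutation of `E`. -/
def equivSigma (n : ℕ) :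
    PartialPerm n ≃ Σ E : Finset (Fin n), Equiv.Perm {x : Fin n // x ∈ E} where
  toFun a := ⟨a.support, a.restrict a.support subset_rfl⟩
  invFun p := ofPerm p.1 p.2
  left_inv a := ofPerm_restrict a
  right_inv p := Sigma.ext rfl (heq_of_eq (restrict_ofPerm p.1 p.2 subset_rfl))

/-- The monoid homomorphism `P_n → ℂ[S_E]` sending `(F, f)` to `f` restricted to `E` if `F ⊆ E`
and to `0` otherwise.  It is multiplicative because `F₁ ∪ F₂ ⊆ E` iff `F₁ ⊆ E` and `F₂ ⊆ E`. -/
noncomputable def toPermAlgebra {n : ℕ} (E : Finset (Fin n)) :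
    PartialPerm n →* MonoidAlgebra ℂ (Equiv.Perm {x : Fin n // x ∈ E}) where
  toFun a := if h : a.support ⊆ E then MonoidAlgebra.single (a.restrict E h) 1 else 0
  map_one' := by
    have h : (1 : PartialPerm n).support ⊆ E := Finset.empty_subset E
    rw [dif_pos h]
    rfl
  map_mul' a b := by
    have hab : (a * b).support ⊆ E ↔ a.support ⊆ E ∧ b.support ⊆ E := Finset.union_subset_iff
    by_cases ha : a.support ⊆ E
    · by_cases hb : b.support ⊆ E
      · rw [dif_pos ha, dif_pos hb, dif_pos (hab.2 ⟨ha, hb⟩), MonoidAlgebra.single_mul_single,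
          one_mul]
        rfl
      · rw [dif_neg hb, dif_neg fun h => hb (hab.1 h).2, mul_zero]
    · rw [dif_neg ha, dif_neg fun h => ha (hab.1 h).1, zero_mul]

/-- The algebra homomorphism `B_n → ∏_E ℂ[S_E]` with components induced by `toPermAlgebra E`. -/
noncomputable def toPiPermAlgebra (n : ℕ) :
    MonoidAlgebra ℂ (PartialPerm n) →ₐ[ℂ]
      ∀ E : Finset (Fin n), MonoidAlgebra ℂ (Equiv.Perm {x : Fin n // x ∈ E}) :=
  AlgHom.pi fun E => MonoidAlgebra.lift ℂ _ _ (toPermAlgebra E)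

theorem toPiPermAlgebra_single {n : ℕ} (a : PartialPerm n) :
    toPiPermAlgebra n (MonoidAlgebra.single a 1) = fun E => toPermAlgebra E a := by
  funext E
  simp [toPiPermAlgebra]

/-- The standard basis elements of `∏_E ℂ[S_E]` are hit.  The image of `(E, σ)` is the basis
element of index `(E, σ)` plus basis elements whose index has a strictly larger subset, so this
follows by downward induction on `E`. -/
theorem single_mem_range {n : ℕ} (E : Finset (Fin n)) :
    ∀ σ : Equiv.Perm {x : Fin n // x ∈ E},
      (Pi.single E (MonoidAlgebra.single σ 1) :
        ∀ E : Finset (Fin n), MonoidAlgebra ℂ (Equiv.Perm {x : Fin n // x ∈ E})) ∈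
        LinearMap.range (toPiPermAlgebra n).toLinearMap := by
  induction E using WellFoundedGT.induction with
  | ind E ih =>
    intro σ
    have key := toPiPermAlgebra_single (ofPerm E σ)
    rw [← Finset.univ_sum_single (fun F => toPermAlgebra F (ofPerm E σ)),
      ← Finset.add_sum_erase _ _ (Finset.mem_univ E)] at key
    have hE : toPermAlgebra E (ofPerm E σ) = MonoidAlgebra.single σ 1 := by
      have h : (ofPerm E σ).support ⊆ E := subset_rfl
      simp only [toPermAlgebra, MonoidHom.coe_mk, OneHom.coe_mk]
      rw [dif_pos h, restrict_ofPerm]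
    rw [hE] at key
    rw [eq_sub_of_add_eq key.symm]
    refine Submodule.sub_mem _ ⟨_, rfl⟩ (Submodule.sum_mem _ fun F hF => ?_)
    by_cases hEF : (ofPerm E σ).support ⊆ F
    · have hlt : E < F := lt_of_le_of_ne hEF (Finset.ne_of_mem_erase hF).symm
      simp only [toPermAlgebra, MonoidHom.coe_mk, OneHom.coe_mk]
      rw [dif_pos hEF]
      exact ih F hlt _
    · simp only [toPermAlgebra, MonoidHom.coe_mk, OneHom.coe_mk]
      rw [dif_neg hEF, Pi.single_zero]
      exact Submodule.zero_mem _

theorem toPiPermAlgebra_surjective (n : ℕ) : Function.Surjective (toPiPermAlgebra n) := by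
  suffices h : ∀ x, x ∈ LinearMap.range (toPiPermAlgebra n).toLinearMap from h
  intro x
  rw [← Finset.univ_sum_single x]
  refine Submodule.sum_mem _ fun E _ => ?_
  induction x E using MonoidAlgebra.induction_linear with
  | zero => rw [Pi.single_zero]; exact Submodule.zero_mem _
  | add f g hf hg => rw [Pi.single_add]; exact Submodule.add_mem _ hf hg
  | single σ c =>
    have h := Submodule.smul_mem _ c (single_mem_range E σ)
    rwa [← Pi.single_smul, MonoidAlgebra.smul_single, smul_eq_mul, mul_one] at h

theorem finrank_eq (n : ℕ) :
    Module.finrank ℂ (MonoidAlgebra ℂ (PartialPerm n)) =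
      Module.finrank ℂ
        (∀ E : Finset (Fin n), MonoidAlgebra ℂ (Equiv.Perm {x : Fin n // x ∈ E})) := by
  have hG : ∀ (G : Type) [Fintype G],
      Module.finrank ℂ (MonoidAlgebra ℂ G) = Fintype.card G := fun G _ => by
    rw [(MonoidAlgebra.coeffLinearEquiv ℂ).finrank_eq, Module.finrank_finsupp_self]
  have hfin : ∀ E : Finset (Fin n),
      Module.Finite ℂ (MonoidAlgebra ℂ (Equiv.Perm {x : Fin n // x ∈ E})) := fun E =>
    Module.Finite.equiv (MonoidAlgebra.coeffLinearEquiv ℂ).symm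
  rw [Module.finrank_pi_fintype, hG, Fintype.card_congr (equivSigma n), Fintype.card_sigma]
  exact Finset.sum_congr rfl fun E _ => (hG _).symm

theorem toPiPermAlgebra_bijective (n : ℕ) : Function.Bijective (toPiPermAlgebra n) := by
  have h₁ : Module.Finite ℂ (MonoidAlgebra ℂ (PartialPerm n)) :=
    Module.Finite.equiv (MonoidAlgebra.coeffLinearEquiv ℂ).symm
  have h₂ : ∀ E : Finset (Fin n),
      Module.Finite ℂ (MonoidAlgebra ℂ (Equiv.Perm {x : Fin n // x ∈ E})) := fun E =>
    Module.Finite.equiv (MonoidAlgebra.coeffLinearEquiv ℂ).symm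
  exact ⟨(LinearMap.injective_iff_surjective_of_finrank_eq_finrank
    (f := (toPiPermAlgebra n).toLinearMap) (finrank_eq n)).2 (toPiPermAlgebra_surjective n),
    toPiPermAlgebra_surjective n⟩

end PartialPerm

/-- An isomorphism of an algebra with a product of algebras restricts to an isomorphism of its
center with the product of the centers. -/
noncomputable def centerEquivPi {R A ι : Type*} {B : ι → Type*} [CommSemiring R] [Semiring A]
    [Algebra R A] [∀ i, Semiring (B i)] [∀ i, Algebra R (B i)] (e : A ≃ₐ[R] ∀ i, B i) :
    Subalgebra.center R A ≃ₐ[R] ∀ i, Subalgebra.center R (B i) where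
  toFun z i := ⟨e z i, by
    classical
    refine Subalgebra.mem_center_iff.2 fun b => ?_
    have h := congrArg e (Subalgebra.mem_center_iff.1 z.2 (e.symm (Pi.single i b)))
    simpa using congrFun h i⟩
  invFun w := ⟨e.symm fun i => w i, by
    refine Subalgebra.mem_center_iff.2 fun a => e.injective ?_
    funext i
    simpa using Subalgebra.mem_center_iff.1 (w i).2 (e a i)⟩
  left_inv z := by simp
  right_inv w := by simp
  map_mul' x y := by ext1 i; apply Subtype.ext; simp
  map_add' x y := by ext1 i; apply Subtype.ext; simp
  commutes' r := by ext1 i; apply Subtype.ext; simp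

/-- the center of `B_n = ℂ[P_n]` is isomorphic as a `ℂ`-algebra to the
direct sum (= direct product, the index set being finite), over all subsets `E` of
`{1,…,n}`, of the centers `Z(ℂ[S_E])` of the group algebras of the symmetric groups
on `E`. -/
theorem center_monoidAlgebra_partialPerm_iso (n : ℕ) :
    Nonempty (Subalgebra.center ℂ (MonoidAlgebra ℂ (PartialPerm n)) ≃ₐ[ℂ]
      ∀ E : Finset (Fin n),
        Subalgebra.center ℂ (MonoidAlgebra ℂ (Equiv.Perm {x : Fin n // x ∈ E}))) :=
  ⟨centerEquivPi (AlgEquiv.ofBijective (PartialPerm.toPiPermAlgebra n)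
    (PartialPerm.toPiPermAlgebra_bijective n))⟩
end

section
/- For any two partitions Δ₁ and Δ₂ there exists a family of nonnegative rational constants Ĉ^{Δ₃}_{Δ₁,Δ₂}, indexed by partitions Δ₃ and nonzero for only finitely many Δ₃ (all satisfying |Δ₃| ≤ |Δ₁| + |Δ₂|), such that for every natural number n the identity A_{Δ₁;n} · A_{Δ₂;n} = ∑_{Δ₃} Ĉ^{Δ₃}_{Δ₁,Δ₂} A_{Δ₃;n} holds in the algebra B_n. In particular the structure constants do not depend on n. -/
namespace PartialPerm

@[simp] theorem mul_support {n : ℕ} (a b : PartialPerm n) :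
    (a * b).support = a.support ∪ b.support := rfl

@[simp] theorem mul_perm {n : ℕ} (a b : PartialPerm n) :
    (a * b).perm = a.perm * b.perm := rfl

theorem perm_support_subset {n : ℕ} (a : PartialPerm n) : a.perm.support ⊆ a.support := by
  intro x hx
  by_contra h
  exact Equiv.Perm.mem_support.1 hx (a.fixes x h)

theorem sum_pCycleType {n : ℕ} (a : PartialPerm n) : (pCycleType a).sum = a.support.card := by
  have h := Finset.card_le_card (perm_support_subset a)
  simp only [pCycleType, Multiset.sum_add, Equiv.Perm.sum_cycleType, Multiset.sum_replicate,
    smul_eq_mul, mul_one]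
  omega

theorem one_le_of_mem_pCycleType {n : ℕ} (a : PartialPerm n) {i : ℕ} (hi : i ∈ pCycleType a) :
    1 ≤ i := by
  rcases Multiset.mem_add.1 hi with h | h
  · exact one_le_two.trans (Equiv.Perm.two_le_of_mem_cycleType h)
  · exact (Multiset.eq_of_mem_replicate h).ge

/-- The cycle type of the underlying permutation consists of the parts `≥ 2`. -/
theorem filter_pCycleType {n : ℕ} (a : PartialPerm n) :
    (pCycleType a).filter (2 ≤ ·) = a.perm.cycleType := by
  rw [pCycleType, Multiset.filter_add, Multiset.filter_eq_self.2
    (fun i hi => Equiv.Perm.two_le_of_mem_cycleType hi), Multiset.filter_eq_nil.2, add_zero]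
  intro i hi
  rw [Multiset.eq_of_mem_replicate hi]
  norm_num

/-- The map `P_m → P_n` induced by an injection `ι : {0, …, m-1} → {0, …, n-1}`:
relabel the support along `ι`, and extend the permutation by the identity. -/
noncomputable def push {m n : ℕ} (ι : Fin m ↪ Fin n) (a : PartialPerm m) : PartialPerm n where
  support := a.support.map ι
  perm := a.perm.viaEmbedding ι
  fixes x hx := by
    by_cases h : x ∈ Set.range ι
    · obtain ⟨y, rfl⟩ := h
      rw [Equiv.Perm.viaEmbedding_apply, a.fixes y]
      simpa using hx
    · exact Equiv.Perm.viaEmbedding_apply_of_notMem _ _ _ h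

theorem push_mul {m n : ℕ} (ι : Fin m ↪ Fin n) (a b : PartialPerm m) :
    push ι (a * b) = push ι a * push ι b :=
  ext' (Finset.map_union _ _) (map_mul (Equiv.Perm.viaEmbeddingHom ι) a.perm b.perm)

theorem push_injective {m n : ℕ} (ι : Fin m ↪ Fin n) : Function.Injective (push ι) :=
  fun _ _ h => ext' (Finset.map_injective ι (congrArg support h))
    (Equiv.Perm.viaEmbeddingHom_injective ι (congrArg perm h))

theorem pCycleType_push {m n : ℕ} (ι : Fin m ↪ Fin n) (a : PartialPerm m) :
    pCycleType (push ι a) = pCycleType a := by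
  classical
  have h : (a.perm.viaEmbedding ι).cycleType = a.perm.cycleType := by
    have e : a.perm.viaEmbedding ι = a.perm.extendDomain (Equiv.ofInjective ι ι.injective) := by
      ext1 x
      by_cases hx : x ∈ Set.range ι
      · obtain ⟨y, rfl⟩ := hx
        rw [Equiv.Perm.viaEmbedding_apply]
        exact (Equiv.Perm.extendDomain_apply_image _ (Equiv.ofInjective ι ι.injective) y).symm
      · rw [Equiv.Perm.viaEmbedding_apply_of_notMem _ _ _ hx,
          Equiv.Perm.extendDomain_apply_not_subtype _ _ hx]
    rw [e, Equiv.Perm.cycleType_extendDomain]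
  simp only [pCycleType, push, h, Finset.card_map, ← Equiv.Perm.sum_cycleType]

/-- Every partial permutation supported inside the range of `ι` comes from `P_m`. -/
theorem exists_push_eq {m n : ℕ} (ι : Fin m ↪ Fin n) (a : PartialPerm n)
    (h : a.support ⊆ Finset.univ.map ι) : ∃ b, push ι b = a := by
  have hmem : ∀ x, x ∈ a.support → x ∈ Set.range ι := fun x hx => by simpa using h hx
  -- `a.perm` preserves the range of `ι`: a moved point and its image both lie in the support.
  have hinv : ∀ x, a.perm x ∈ Set.range ι ↔ x ∈ Set.range ι := by
    intro x
    by_cases hx : a.perm x = x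
    · rw [hx]
    · have h1 : x ∈ a.perm.support := Equiv.Perm.mem_support.2 hx
      exact iff_of_true
        (hmem _ (perm_support_subset a (Equiv.Perm.apply_mem_support.2 h1)))
        (hmem _ (perm_support_subset a h1))
  let e : Fin m ≃ Set.range ι := Equiv.ofInjective ι ι.injective
  let g : Equiv.Perm (Fin m) := (e.trans (a.perm.subtypePerm hinv)).trans e.symm
  have hg : ∀ y, ι (g y) = a.perm (ι y) := fun y =>
    congrArg Subtype.val (e.apply_symm_apply (a.perm.subtypePerm hinv (e y)))
  refine ⟨⟨a.support.preimage ι ι.injective.injOn, g, fun y hy => ?_⟩, ext' ?_ ?_⟩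
  · apply ι.injective
    rw [hg, a.fixes]
    simpa using hy
  · ext x
    simp only [push, Finset.mem_map, Finset.mem_preimage]
    constructor
    · rintro ⟨y, hy, rfl⟩
      exact hy
    · intro hx
      obtain ⟨y, rfl⟩ := hmem x hx
      exact ⟨y, hx, rfl⟩
  · ext1 x
    by_cases hx : x ∈ Set.range ι
    · obtain ⟨y, rfl⟩ := hx
      exact (Equiv.Perm.viaEmbedding_apply _ _ _).trans (hg y)
    · exact (Equiv.Perm.viaEmbedding_apply_of_notMem _ _ _ hx).trans
        (a.fixes x fun h => hx (hmem x h)).symm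

/-- The factorizations `c = a · b` in `P_n` with `a` of cycle type `Δ₁` and `b` of cycle
type `Δ₂`. -/
abbrev Factorization (Δ₁ Δ₂ : Multiset ℕ) {n : ℕ} (c : PartialPerm n) : Type :=
  {p : PartialPerm n × PartialPerm n // pCycleType p.1 = Δ₁ ∧ pCycleType p.2 = Δ₂ ∧ p.1 * p.2 = c}

/-- The factors of `push ι c` have support inside the range of `ι`, so they come from `P_m`. -/
theorem card_factorization_push (Δ₁ Δ₂ : Multiset ℕ) {m n : ℕ} (ι : Fin m ↪ Fin n)
    (c : PartialPerm m) :
    Nat.card (Factorization Δ₁ Δ₂ (push ι c)) = Nat.card (Factorization Δ₁ Δ₂ c) := by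
  symm
  refine Nat.card_congr (Equiv.ofBijective
    (fun p => ⟨(push ι p.1.1, push ι p.1.2), ?_, ?_, ?_⟩) ⟨?_, ?_⟩)
  · rw [pCycleType_push, p.2.1]
  · rw [pCycleType_push, p.2.2.1]
  · rw [← push_mul, p.2.2.2]
  · rintro ⟨⟨a, b⟩, hp⟩ ⟨⟨a', b'⟩, hp'⟩ h
    simp only [Subtype.mk.injEq, Prod.mk.injEq] at h ⊢
    exact ⟨push_injective ι h.1, push_injective ι h.2⟩
  · rintro ⟨⟨a, b⟩, ha, hb, hab⟩
    have hs : a.support ∪ b.support ⊆ Finset.univ.map ι := by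
      have h := congrArg support hab
      rw [mul_support] at h
      rw [h]
      exact Finset.map_subset_map.2 (Finset.subset_univ _)
    obtain ⟨a, rfl⟩ := exists_push_eq ι a (Finset.subset_union_left.trans hs)
    obtain ⟨b, rfl⟩ := exists_push_eq ι b (Finset.subset_union_right.trans hs)
    refine ⟨⟨(a, b), ?_, ?_, push_injective ι ?_⟩, rfl⟩
    · rw [← ha, pCycleType_push]
    · rw [← hb, pCycleType_push]
    · rw [push_mul]; exact hab

theorem exists_push_full {n k : ℕ} (c : PartialPerm n) (hk : c.support.card = k) :
    ∃ (ι : Fin k ↪ Fin n) (d : PartialPerm k), d.support = Finset.univ ∧ push ι d = c := by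
  let ι : Fin k ↪ Fin n := (c.support.orderEmbOfFin hk).toEmbedding
  have hι : Finset.univ.map ι = c.support := Finset.map_orderEmbOfFin_univ _ _
  obtain ⟨d, hd⟩ := exists_push_eq ι c hι.ge
  refine ⟨ι, d, Finset.map_injective ι ?_, hd⟩
  rw [hι, ← hd]
  rfl

/-- For an equivalence, `push` is relabelling, so partial permutations of full support with the
same cycle type are related by `push` along a conjugating permutation. -/
theorem exists_push_equiv {k : ℕ} (d d' : PartialPerm k) (hd : d.support = Finset.univ)
    (hd' : d'.support = Finset.univ) (h : pCycleType d = pCycleType d') :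
    ∃ v : Equiv.Perm (Fin k), push v.toEmbedding d = d' := by
  have hc : IsConj d.perm d'.perm := Equiv.Perm.isConj_of_cycleType_eq (by
    rw [← filter_pCycleType, ← filter_pCycleType, h])
  obtain ⟨v, hv⟩ := isConj_iff.1 hc
  refine ⟨v, ext' ?_ ?_⟩
  · simp [push, hd, hd']
  · ext1 x
    obtain ⟨y, rfl⟩ := v.surjective x
    refine (Equiv.Perm.viaEmbedding_apply d.perm v.toEmbedding y).trans ?_
    simp [← hv]

/-- The number of factorizations of a partial permutation depends only on its cycle type, and
in particular not on the size of the ground set. -/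
theorem card_factorization_eq (Δ₁ Δ₂ : Multiset ℕ) {m n : ℕ} (c : PartialPerm m)
    (c' : PartialPerm n) (h : pCycleType c = pCycleType c') :
    Nat.card (Factorization Δ₁ Δ₂ c) = Nat.card (Factorization Δ₁ Δ₂ c') := by
  obtain ⟨k, hk⟩ : ∃ k, c.support.card = k := ⟨_, rfl⟩
  have hk' : c'.support.card = k := by rw [← hk, ← sum_pCycleType, ← sum_pCycleType, h]
  obtain ⟨ι, d, hd, rfl⟩ := exists_push_full c hk
  obtain ⟨ι', d', hd', rfl⟩ := exists_push_full c' hk'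
  rw [pCycleType_push, pCycleType_push] at h
  obtain ⟨v, rfl⟩ := exists_push_equiv d d' hd hd' h
  simp only [card_factorization_push]

open Classical in
/-- The structure constant `Ĉ^{Δ}_{Δ₁,Δ₂}`: the number of factorizations of any partial
permutation of cycle type `Δ`, and `0` when `Δ` is not the cycle type of a partial permutation. -/
noncomputable def structConst (Δ₁ Δ₂ Δ : Multiset ℕ) : ℕ :=
  if h : ∃ c : Σ n, PartialPerm n, pCycleType c.2 = Δ then
    Nat.card (Factorization Δ₁ Δ₂ h.choose.2) else 0

theorem structConst_pCycleType (Δ₁ Δ₂ : Multiset ℕ) {n : ℕ} (c : PartialPerm n) :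
    structConst Δ₁ Δ₂ (pCycleType c) = Nat.card (Factorization Δ₁ Δ₂ c) := by
  have h : ∃ c' : Σ n, PartialPerm n, pCycleType c'.2 = pCycleType c := ⟨⟨n, c⟩, rfl⟩
  rw [structConst, dif_pos h]
  exact card_factorization_eq _ _ _ _ h.choose_spec

theorem of_structConst_ne_zero {Δ₁ Δ₂ Δ : Multiset ℕ} (h : structConst Δ₁ Δ₂ Δ ≠ 0) :
    (∀ i ∈ Δ, 1 ≤ i) ∧ Δ.sum ≤ Δ₁.sum + Δ₂.sum := by
  by_cases hΔ : ∃ c : Σ n, PartialPerm n, pCycleType c.2 = Δ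
  · obtain ⟨⟨n, c⟩, rfl⟩ := hΔ
    rw [structConst_pCycleType] at h
    obtain ⟨⟨⟨a, b⟩, ha, hb, hab⟩⟩ := (Nat.card_ne_zero.1 h).1
    refine ⟨fun i => one_le_of_mem_pCycleType _, ?_⟩
    rw [← ha, ← hb, ← hab]
    simp only [sum_pCycleType]
    exact Finset.card_union_le _ _
  · exact absurd (dif_neg hΔ) h

theorem finite_partitions_sum_le (s : ℕ) :
    {Δ : Multiset ℕ | (∀ i ∈ Δ, 1 ≤ i) ∧ Δ.sum ≤ s}.Finite := by
  refine ((Set.finite_Iic s).biUnion (t := fun k => Set.range (Nat.Partition.parts (n := k)))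
    (fun k _ => Set.finite_range _)).subset ?_
  rintro Δ ⟨h1, h2⟩
  exact Set.mem_biUnion (show Δ.sum ∈ Set.Iic s from h2) ⟨⟨Δ, fun hi => h1 _ hi, rfl⟩, rfl⟩

theorem coeff_A (Δ : Multiset ℕ) {n : ℕ} (c : PartialPerm n) :
    (A Δ n).coeff c = if pCycleType c = Δ then 1 else 0 := by
  classical
  rw [A, MonoidAlgebra.coeff_sum, Finset.sum_apply', Finset.sum_eq_single c]
  · split_ifs <;> simp
  · intro b _ hb
    split_ifs <;> simp [hb]
  · simp

theorem coeff_A_mul_A (Δ₁ Δ₂ : Multiset ℕ) {n : ℕ} (c : PartialPerm n) :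
    (A Δ₁ n * A Δ₂ n).coeff c = Nat.card (Factorization Δ₁ Δ₂ c) := by
  classical
  rw [Nat.card_eq_fintype_card, Fintype.card_subtype, Finset.card_filter, Nat.cast_sum,
    Fintype.sum_prod_type, A, A, Finset.sum_mul_sum, MonoidAlgebra.coeff_sum, Finset.sum_apply']
  refine Finset.sum_congr rfl fun a _ => ?_
  rw [MonoidAlgebra.coeff_sum, Finset.sum_apply']
  refine Finset.sum_congr rfl fun b _ => ?_
  by_cases ha : pCycleType a = Δ₁ <;> by_cases hb : pCycleType b = Δ₂ <;>
    simp [ha, hb, MonoidAlgebra.single_mul_single, Finsupp.single_apply]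

end PartialPerm

open PartialPerm in
/-- for any two partitions `Δ₁, Δ₂` there is a finitely supported family
of nonnegative rational structure constants `Ĉ^{Δ₃}_{Δ₁,Δ₂}` (indexed by partitions
`Δ₃`, all with `|Δ₃| ≤ |Δ₁| + |Δ₂|`) such that for EVERY `n`,
`A_{Δ₁;n} · A_{Δ₂;n} = ∑_{Δ₃} Ĉ^{Δ₃}_{Δ₁,Δ₂} A_{Δ₃;n}` in `B_n`; in particular the
structure constants do not depend on `n`. -/
theorem structure_constants_A (Δ₁ Δ₂ : Multiset ℕ)
    (h₁ : ∀ i ∈ Δ₁, 1 ≤ i) (h₂ : ∀ i ∈ Δ₂, 1 ≤ i) :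
    ∃ C : Multiset ℕ →₀ ℚ,
      (∀ Δ₃, 0 ≤ C Δ₃) ∧
      (∀ Δ₃ ∈ C.support, (∀ i ∈ Δ₃, 1 ≤ i) ∧ Δ₃.sum ≤ Δ₁.sum + Δ₂.sum) ∧
      (∀ n : ℕ, A Δ₁ n * A Δ₂ n = ∑ Δ₃ ∈ C.support, (C Δ₃ : ℂ) • A Δ₃ n) := by
  have hfin : (Function.support fun Δ => (structConst Δ₁ Δ₂ Δ : ℚ)).Finite :=
    (finite_partitions_sum_le (Δ₁.sum + Δ₂.sum)).subset fun Δ hΔ =>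
      of_structConst_ne_zero (Nat.cast_ne_zero.1 hΔ)
  refine ⟨Finsupp.ofSupportFinite _ hfin, fun Δ => Nat.cast_nonneg _, fun Δ hΔ => ?_, fun n => ?_⟩
  · exact of_structConst_ne_zero (Nat.cast_ne_zero.1 (Finsupp.mem_support_iff.1 hΔ))
  · ext c
    rw [coeff_A_mul_A, MonoidAlgebra.coeff_sum, Finset.sum_apply',
      Finset.sum_eq_single (pCycleType c)]
    · simp [coeff_A, Finsupp.ofSupportFinite_coe, structConst_pCycleType]
    · intro Δ _ hΔ
      simp [coeff_A, hΔ.symm]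
    · intro h
      rw [Finsupp.notMem_support_iff.1 h]
      simp
end

section
/- As ℂ-linear operators on the polynomial ring ℂ[p₁,p₂,p₃,…], the composition W((1)) ∘ W((1,1)) equals 2·W((1,1)) + 3·W((1,1,1)). -/
/-!
On polynomials in the variables `p_a`, `a ∈ s`, with `s` finite, `W((1))` is the derivation
`D = ∑_{a ∈ s} a p_a ∂_a`, which scales each `p_a` by `a`. All sums in the statement collapse to
finite sums over such an `s` (`W1_eq`, `W11_eq`, `W111_eq`), which become combinations of
`S1 i = ∑ a^i p_a ∂_a`, `S2 i j = ∑ a^i b^j p_a p_b ∂_a ∂_b` and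
`S3 = ∑ abc p_a p_b p_c ∂_a ∂_b ∂_c`. The Leibniz rule and commutation of partial derivatives give
`D ∘ S1 i = S1 (i+1) + S2 i 1` and `D ∘ S2 1 1 = S2 2 1 + S2 1 2 + S3` (`eulerDer_S1`,
`eulerDer_S2`), and with `S2 1 2 = S2 2 1` the theorem is a linear identity among these operators.
-/

open MvPolynomial

/-- The coefficient cast `ℕ+ → ℂ`. -/
def cc (a : ℕ+) : ℂ := ((a : ℕ) : ℂ)

/-- The operator `W((1)) = ∑_a a·p_a·∂/∂p_a` on `ℂ[p₁,p₂,…]`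
(the `p_a` are the variables `X a` of `MvPolynomial ℕ+ ℂ`; on any given polynomial
only finitely many summands are nonzero, and `∑ᶠ` denotes this finite sum). -/
noncomputable def W1 (f : MvPolynomial ℕ+ ℂ) : MvPolynomial ℕ+ ℂ :=
  ∑ᶠ a : ℕ+, cc a • (X a * pderiv a f)

/-- The operator `W((1,1)) = (1/2)∑_a a(a-1)·p_a·∂/∂p_a
+ (1/2)∑_{a,b} ab·p_a p_b·∂²/(∂p_a∂p_b)`. -/
noncomputable def W11 (f : MvPolynomial ℕ+ ℂ) : MvPolynomial ℕ+ ℂ :=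
  (1/2 : ℂ) • (∑ᶠ a : ℕ+, (cc a * (cc a - 1)) • (X a * pderiv a f))
  + (1/2 : ℂ) • (∑ᶠ a : ℕ+, ∑ᶠ b : ℕ+,
      (cc a * cc b) • (X a * X b * pderiv a (pderiv b f)))

/-- The operator `W((1,1,1)) = (1/6)∑_a a(a-1)(a-2)·p_a·∂/∂p_a
+ (1/2)∑_{a,b} a(a-1)b·p_a p_b·∂²/(∂p_a∂p_b)
+ (1/6)∑_{a,b,c} abc·p_a p_b p_c·∂³/(∂p_a∂p_b∂p_c)`. -/
noncomputable def W111 (f : MvPolynomial ℕ+ ℂ) : MvPolynomial ℕ+ ℂ :=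
  (1/6 : ℂ) • (∑ᶠ a : ℕ+, (cc a * (cc a - 1) * (cc a - 2)) • (X a * pderiv a f))
  + (1/2 : ℂ) • (∑ᶠ a : ℕ+, ∑ᶠ b : ℕ+,
      (cc a * (cc a - 1) * cc b) • (X a * X b * pderiv a (pderiv b f)))
  + (1/6 : ℂ) • (∑ᶠ a : ℕ+, ∑ᶠ b : ℕ+, ∑ᶠ c : ℕ+,
      (cc a * cc b * cc c) • (X a * X b * X c * pderiv a (pderiv b (pderiv c f))))

/-- The operator `W((2),z) = (1/2)∑_{a,b}(a+b)·p_a p_b·∂/∂p_{a+b}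
+ (z²/2)∑_{a,b} ab·p_{a+b}·∂²/(∂p_a∂p_b)`. -/
noncomputable def W2 (z : ℂ) (f : MvPolynomial ℕ+ ℂ) : MvPolynomial ℕ+ ℂ :=
  (1/2 : ℂ) • (∑ᶠ a : ℕ+, ∑ᶠ b : ℕ+,
      (cc a + cc b) • (X a * X b * pderiv (a + b) f))
  + (z^2/2 : ℂ) • (∑ᶠ a : ℕ+, ∑ᶠ b : ℕ+,
      (cc a * cc b) • (X (a + b) * pderiv a (pderiv b f)))

/-- The operator `W((2,1),z) = (1/2)∑_{a,b}(a+b)(a+b-2)·p_a p_b·∂/∂p_{a+b}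
+ (1/2)∑_{a,b,c}(a+b)c·p_a p_b p_c·∂²/(∂p_{a+b}∂p_c)
+ (z²/2)∑_{a,b,c} abc·p_a p_{b+c}·∂³/(∂p_a∂p_b∂p_c)
+ (z²/2)∑_{a,b} ab(a+b-2)·p_{a+b}·∂²/(∂p_a∂p_b)`. -/
noncomputable def W21 (z : ℂ) (f : MvPolynomial ℕ+ ℂ) : MvPolynomial ℕ+ ℂ :=
  (1/2 : ℂ) • (∑ᶠ a : ℕ+, ∑ᶠ b : ℕ+,
      ((cc a + cc b) * (cc a + cc b - 2)) • (X a * X b * pderiv (a + b) f))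
  + (1/2 : ℂ) • (∑ᶠ a : ℕ+, ∑ᶠ b : ℕ+, ∑ᶠ c : ℕ+,
      ((cc a + cc b) * cc c) • (X a * X b * X c * pderiv (a + b) (pderiv c f)))
  + (z^2/2 : ℂ) • (∑ᶠ a : ℕ+, ∑ᶠ b : ℕ+, ∑ᶠ c : ℕ+,
      (cc a * cc b * cc c) • (X a * X (b + c) * pderiv a (pderiv b (pderiv c f))))
  + (z^2/2 : ℂ) • (∑ᶠ a : ℕ+, ∑ᶠ b : ℕ+,
      (cc a * cc b * (cc a + cc b - 2)) • (X (a + b) * pderiv a (pderiv b f)))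

theorem finsum_eq_sum_of_notMem {M : Type*} [AddCommMonoid M] (s : Finset ℕ+) (g : ℕ+ → M)
    (h : ∀ a, a ∉ s → g a = 0) : ∑ᶠ a, g a = ∑ a ∈ s, g a :=
  finsum_eq_sum_of_support_subset g fun a ha => by
    by_contra hs
    exact ha (h a hs)

theorem pderiv_comm_apply (a b : ℕ+) (f : MvPolynomial ℕ+ ℂ) :
    pderiv a (pderiv b f) = pderiv b (pderiv a f) := by
  have h : ⁅(pderiv a : Derivation ℂ (MvPolynomial ℕ+ ℂ) (MvPolynomial ℕ+ ℂ)),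
      (pderiv b : Derivation ℂ (MvPolynomial ℕ+ ℂ) (MvPolynomial ℕ+ ℂ))⁆ = 0 := by
    apply MvPolynomial.derivation_ext
    intro i
    simp only [Derivation.commutator_apply, pderiv_X, Derivation.zero_apply]
    simp [Pi.single_apply, apply_ite]
  have := congrArg (fun D => D f) h
  simpa [Derivation.commutator_apply, sub_eq_zero] using this

/-- The first-order operator `∑_a a^i · p_a ∂/∂p_a`, summed over a finite set of indices. -/
noncomputable def S1 (s : Finset ℕ+) (i : ℕ) (f : MvPolynomial ℕ+ ℂ) : MvPolynomial ℕ+ ℂ :=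
  ∑ a ∈ s, cc a ^ i • (X a * pderiv a f)

/-- The second-order operator `∑_{a,b} a^i b^j · p_a p_b ∂²/(∂p_a ∂p_b)`, summed over a finite set
of indices. -/
noncomputable def S2 (s : Finset ℕ+) (i j : ℕ) (f : MvPolynomial ℕ+ ℂ) : MvPolynomial ℕ+ ℂ :=
  ∑ a ∈ s, ∑ b ∈ s, (cc a ^ i * cc b ^ j) • (X a * X b * pderiv a (pderiv b f))

/-- The third-order operator `∑_{a,b,c} abc · p_a p_b p_c ∂³/(∂p_a ∂p_b ∂p_c)`, summed over a finite
set of indices. -/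
noncomputable def S3 (s : Finset ℕ+) (f : MvPolynomial ℕ+ ℂ) : MvPolynomial ℕ+ ℂ :=
  ∑ a ∈ s, ∑ b ∈ s, ∑ c ∈ s,
    (cc a * cc b * cc c) • (X a * X b * X c * pderiv a (pderiv b (pderiv c f)))

theorem S2_comm (s : Finset ℕ+) (i j : ℕ) (f : MvPolynomial ℕ+ ℂ) : S2 s i j f = S2 s j i f := by
  unfold S2
  rw [Finset.sum_comm]
  refine Finset.sum_congr rfl fun a _ => Finset.sum_congr rfl fun b _ => ?_
  rw [pderiv_comm_apply, mul_comm (X b), mul_comm (cc b ^ i)]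

/-- The weighted Euler derivation `∑_a a · p_a ∂/∂p_a`, summed over a finite set of indices. -/
noncomputable def eulerDer (s : Finset ℕ+) :
    Derivation ℂ (MvPolynomial ℕ+ ℂ) (MvPolynomial ℕ+ ℂ) :=
  ∑ a ∈ s, (cc a • X a : MvPolynomial ℕ+ ℂ) • pderiv a

theorem eulerDer_apply (s : Finset ℕ+) (f : MvPolynomial ℕ+ ℂ) :
    eulerDer s f = ∑ a ∈ s, cc a • (X a * pderiv a f) := by
  unfold eulerDer
  rw [← Derivation.coeFnAddMonoidHom_apply, map_sum, Finset.sum_apply]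
  simp

theorem eulerDer_X (s : Finset ℕ+) {b : ℕ+} (hb : b ∈ s) :
    eulerDer s (X b) = cc b • (X b : MvPolynomial ℕ+ ℂ) := by
  rw [eulerDer_apply, Finset.sum_eq_single_of_mem b hb]
  · simp
  · intro a _ h
    simp [pderiv_X_of_ne h.symm]

theorem eulerDer_S1 (s : Finset ℕ+) (i : ℕ) (f : MvPolynomial ℕ+ ℂ) :
    eulerDer s (S1 s i f) = S1 s (i + 1) f + S2 s i 1 f := by
  unfold S1 S2
  rw [map_sum, ← Finset.sum_add_distrib]
  refine Finset.sum_congr rfl fun a ha => ?_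
  rw [Derivation.map_smul, Derivation.leibniz, eulerDer_X s ha, eulerDer_apply, smul_eq_mul,
    smul_eq_mul, smul_add, add_comm, Finset.mul_sum, Finset.smul_sum]
  congr 1
  · simp only [smul_eq_C_mul, map_pow]
    ring
  · refine Finset.sum_congr rfl fun b _ => ?_
    rw [pderiv_comm_apply a b]
    simp only [smul_eq_C_mul, map_pow, map_mul]
    ring

theorem eulerDer_S2 (s : Finset ℕ+) (f : MvPolynomial ℕ+ ℂ) :
    eulerDer s (S2 s 1 1 f) = S2 s 2 1 f + S2 s 1 2 f + S3 s f := by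
  unfold S2 S3
  rw [map_sum, ← Finset.sum_add_distrib, ← Finset.sum_add_distrib]
  refine Finset.sum_congr rfl fun a ha => ?_
  rw [map_sum, ← Finset.sum_add_distrib, ← Finset.sum_add_distrib]
  refine Finset.sum_congr rfl fun b hb => ?_
  rw [Derivation.map_smul, Derivation.leibniz, Derivation.leibniz, eulerDer_X s ha, eulerDer_X s hb,
    eulerDer_apply]
  have h : ∑ c ∈ s, (cc a * cc b * cc c) • (X a * X b * X c * pderiv a (pderiv b (pderiv c f)))
      = (C (cc a * cc b) * X a * X b) * ∑ c ∈ s, cc c • (X c * pderiv c (pderiv a (pderiv b f))) := by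
    rw [Finset.mul_sum]
    refine Finset.sum_congr rfl fun c _ => ?_
    rw [pderiv_comm_apply b c, pderiv_comm_apply a c]
    simp only [smul_eq_C_mul, map_mul]
    ring
  rw [h]
  simp only [smul_eq_mul, smul_eq_C_mul, map_pow, map_mul]
  ring

section Finsum

variable {s : Finset ℕ+} {f : MvPolynomial ℕ+ ℂ}

theorem pderiv_eq_zero_of_notMem (hs : f.vars ⊆ s) {a : ℕ+} (ha : a ∉ s) : pderiv a f = 0 :=
  pderiv_eq_zero_of_notMem_vars fun h => ha (hs h)

theorem finsum_pderiv (hs : f.vars ⊆ s) (k : ℕ+ → ℂ) :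
    ∑ᶠ a, k a • (X a * pderiv a f) = ∑ a ∈ s, k a • (X a * pderiv a f) :=
  finsum_eq_sum_of_notMem s _ fun a ha => by simp [pderiv_eq_zero_of_notMem hs ha]

theorem finsum_pderiv_pderiv (hs : f.vars ⊆ s) (k : ℕ+ → ℕ+ → ℂ) :
    ∑ᶠ a, ∑ᶠ b, k a b • (X a * X b * pderiv a (pderiv b f))
      = ∑ a ∈ s, ∑ b ∈ s, k a b • (X a * X b * pderiv a (pderiv b f)) := by
  rw [finsum_eq_sum_of_notMem s]
  · exact Finset.sum_congr rfl fun a _ => finsum_eq_sum_of_notMem s _ fun b hb => by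
      simp [pderiv_eq_zero_of_notMem hs hb]
  · intro a ha
    simp [pderiv_comm_apply a, pderiv_eq_zero_of_notMem hs ha]

theorem finsum_pderiv_pderiv_pderiv (hs : f.vars ⊆ s) (k : ℕ+ → ℕ+ → ℕ+ → ℂ) :
    ∑ᶠ a, ∑ᶠ b, ∑ᶠ c, k a b c • (X a * X b * X c * pderiv a (pderiv b (pderiv c f)))
      = ∑ a ∈ s, ∑ b ∈ s, ∑ c ∈ s,
          k a b c • (X a * X b * X c * pderiv a (pderiv b (pderiv c f))) := by
  have h1 : ∀ a b c, a ∉ s → pderiv a (pderiv b (pderiv c f)) = 0 := fun a b c ha => by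
    rw [pderiv_comm_apply a b, pderiv_comm_apply a c, pderiv_eq_zero_of_notMem hs ha]
    simp
  have h2 : ∀ b c, b ∉ s → pderiv b (pderiv c f) = 0 := fun b c hb => by
    rw [pderiv_comm_apply b c, pderiv_eq_zero_of_notMem hs hb, map_zero]
  rw [finsum_eq_sum_of_notMem s]
  · refine Finset.sum_congr rfl fun a _ => ?_
    rw [finsum_eq_sum_of_notMem s]
    · exact Finset.sum_congr rfl fun b _ => finsum_eq_sum_of_notMem s _ fun c hc => by
        simp [pderiv_eq_zero_of_notMem hs hc]
    · intro b hb
      simp [h2 b _ hb]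
  · intro a ha
    simp [h1 a _ _ ha]

theorem W1_eq (hs : f.vars ⊆ s) : W1 f = eulerDer s f := by
  rw [W1, finsum_pderiv hs, eulerDer_apply]

theorem W11_eq (hs : f.vars ⊆ s) :
    W11 f = (1/2 : ℂ) • (S1 s 2 f - S1 s 1 f) + (1/2 : ℂ) • S2 s 1 1 f := by
  rw [W11, finsum_pderiv hs, finsum_pderiv_pderiv hs]
  simp only [S1, S2, pow_one, ← Finset.sum_sub_distrib, ← sub_smul]
  congr! 4
  ring

theorem W111_eq (hs : f.vars ⊆ s) :
    W111 f = (1/6 : ℂ) • (S1 s 3 f - (3 : ℂ) • S1 s 2 f + (2 : ℂ) • S1 s 1 f)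
      + (1/2 : ℂ) • (S2 s 2 1 f - S2 s 1 1 f) + (1/6 : ℂ) • S3 s f := by
  rw [W111, finsum_pderiv hs, finsum_pderiv_pderiv hs, finsum_pderiv_pderiv_pderiv hs]
  simp only [S1, S2, S3, pow_one, Finset.smul_sum (r := (3 : ℂ)), Finset.smul_sum (r := (2 : ℂ)),
    smul_smul (3 : ℂ), smul_smul (2 : ℂ), ← Finset.sum_sub_distrib, ← Finset.sum_add_distrib,
    ← sub_smul, ← add_smul]
  congr! 5
  · ring
  · congr 1
    ring

end Finsum

/-- as operators on `ℂ[p₁,p₂,…]`, `W((1)) ∘ W((1,1)) = 2·W((1,1)) + 3·W((1,1,1))`. -/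
theorem W1_comp_W11 (f : MvPolynomial ℕ+ ℂ) :
    W1 (W11 f) = (2 : ℂ) • W11 f + (3 : ℂ) • W111 f := by
  -- The index set must also contain the variables of `W11 f`, to which `W1` is applied.
  have hs : f.vars ⊆ f.vars ∪ (W11 f).vars := Finset.subset_union_left
  rw [W1_eq (s := f.vars ∪ (W11 f).vars) Finset.subset_union_right]
  generalize f.vars ∪ (W11 f).vars = s at hs
  rw [W11_eq hs, W111_eq hs]
  simp only [map_add, map_sub, Derivation.map_smul, eulerDer_S1, eulerDer_S2, S2_comm s 1 2]
  module
end
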